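/- For every t > 0, every a > 0 and every nonzero real number ν, E[ (A_t^{(ν)} − a)^+ ] = (e^{νt} − 1)/ν − a + e^{ν t/2 − ν² t/2} · a^{2ν+2} · E[ M_t^ν · (a + A_t)^{-(2ν+1)} · exp( 2·M_t/(a + A_t) − 2/a ) ]. -/

import Mathlib

open MeasureTheory ProbabilityTheory Real Set

noncomputable section

/-- A standard one-dimensional Brownian motion `B` (with `B 0 = 0`, continuous
paths, Gaussian increments and independent increments) on a probability space
with measure `P`. -/
structure IsBrownianMotion {Ω : Type*} [MeasurableSpace Ω]
    (P : Measure Ω) (B : ℝ → Ω → ℝ) : Prop where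
  isProbabilityMeasure : IsProbabilityMeasure P
  measurable : ∀ t : ℝ, Measurable (B t)
  start : ∀ ω, B 0 ω = 0
  continuous_paths : ∀ ω, Continuous fun t => B t ω
  gaussian_increments : ∀ s t : ℝ, 0 ≤ s → s ≤ t →
    P.map (fun ω => B t ω - B s ω) = gaussianReal 0 (Real.toNNReal (t - s))
  indep_increments : ∀ t : ℕ → ℝ, Monotone t → 0 ≤ t 0 →
    iIndepFun
      (fun (i : ℕ) (ω : Ω) => B (t (i + 1)) ω - B (t i) ω) P

/-- The exponential martingale `M_t = exp (B_t - t/2)`. -/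
def M {Ω : Type*} (B : ℝ → Ω → ℝ) (t : ℝ) (ω : Ω) : ℝ :=
  Real.exp (B t ω - t / 2)

/-- The time integral `A_t = ∫_0^t exp (B_s - s/2) ds`. -/
def A {Ω : Type*} (B : ℝ → Ω → ℝ) (t : ℝ) (ω : Ω) : ℝ :=
  ∫ s in (0 : ℝ)..t, Real.exp (B s ω - s / 2)

/-- The time integral with drift `ν`: `A_t^{(ν)} = ∫_0^t exp (B_s + (ν - 1/2) s) ds`. -/
def Adrift {Ω : Type*} (B : ℝ → Ω → ℝ) (ν t : ℝ) (ω : Ω) : ℝ :=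
  ∫ s in (0 : ℝ)..t, Real.exp (B s ω + (ν - 1 / 2) * s)

variable {Ω : Type*} [MeasurableSpace Ω] (P : MeasureTheory.Measure Ω) (B : ℝ → Ω → ℝ)

/-!
Adding a unit drift to `B` up to time `s ≤ t` amounts to a change of measure with density `M_s`.
It moves `(log M_t, A_t)` along a curve whose velocity, transported back to the undrifted path, is
`M_s (1, A_t - A_s)`. As `s` runs over `[0, t]` this velocity integrates exactly, because
`dA_s = M_s ds`, and gives
`E[A_t ∂₁f + (A_t ^ 2 / 2) ∂₂f] = E[(M_t - 1) f]` at `(log M_t, A_t)`.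
In the coordinates `(1 / A_t, M_t / A_t ^ 2)` the vector field on the left is `-∂₁ / 2`, and the
weight `exp (2 (M_t + 1) / A_t)` absorbs the factor on the right: the weighted law of
`(1 / A_t, M_t / A_t ^ 2)` is invariant under translation of its first coordinate. Translating by
`1 / a` turns `E[M_t ^ ν (a - A_t)^+]` into the expectation of the theorem; a drift `ν` up to time
`t` and put-call parity take care of `E[(A_t^{(ν)} - a)^+]`.
-/

open scoped NNReal ENNReal Topology
open Filter

section GaussianShift

lemma gaussianReal_withDensity_exp (μ κ : ℝ) (v : ℝ≥0) :
    (gaussianReal μ v).withDensity (fun x => .ofReal (rexp (κ * (x - μ) - κ ^ 2 * v / 2)))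
      = gaussianReal (μ + κ * v) v := by
  rcases eq_or_ne v 0 with rfl | hv
  · simp [gaussianReal_zero_var, dirac_withDensity]
  have hv' : (v : ℝ) ≠ 0 := by exact_mod_cast hv
  rw [gaussianReal_of_var_ne_zero _ hv, gaussianReal_of_var_ne_zero _ hv,
    ← withDensity_mul _ (measurable_gaussianPDF μ v) (by fun_prop)]
  congr 1 with x
  simp only [Pi.mul_apply, gaussianPDF, gaussianPDFReal]
  rw [← ENNReal.ofReal_mul (by positivity), mul_assoc, ← Real.exp_add]
  congr 4
  field_simp
  ring

variable {Ω E : Type*} [MeasurableSpace Ω] [MeasurableSpace E] {P : Measure Ω}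

lemma map_withDensity_comp {f : Ω → E} (hf : Measurable f) {g : E → ℝ≥0∞} (hg : Measurable g) :
    (P.withDensity (g ∘ f)).map f = (P.map f).withDensity g := by
  ext S hS
  rw [Measure.map_apply hf hS, withDensity_apply _ (hf hS), withDensity_apply _ hS,
    setLIntegral_map hS hg hf]
  rfl

lemma map_withDensity_exp_of_indepFun [IsProbabilityMeasure P] {Z : Ω → E} {Y : Ω → ℝ} {v : ℝ≥0}
    (hZ : Measurable Z) (hY : Measurable Y) (hYv : P.map Y = gaussianReal 0 v)
    (hZY : IndepFun Z Y P) (κ : ℝ) :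
    (P.withDensity fun ω => .ofReal (rexp (κ * Y ω - κ ^ 2 * v / 2))).map (fun ω => (Z ω, Y ω))
      = P.map fun ω => (Z ω, Y ω + κ * v) := by
  set g : ℝ → ℝ≥0∞ := fun y => .ofReal (rexp (κ * y - κ ^ 2 * v / 2))
  have hg : Measurable g := by fun_prop
  have tilt : (gaussianReal 0 v).withDensity g = (gaussianReal 0 v).map (· + κ * v) := by
    simpa [gaussianReal_map_add_const] using gaussianReal_withDensity_exp 0 κ v
  have joint : P.map (fun ω => (Z ω, Y ω)) = (P.map Z).prod (gaussianReal 0 v) := by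
    rw [(indepFun_iff_map_prod_eq_prod_map_map hZ.aemeasurable hY.aemeasurable).1 hZY, hYv]
  have := Measure.isProbabilityMeasure_map (μ := P) hZ.aemeasurable
  calc _ = (P.map fun ω => (Z ω, Y ω)).withDensity (g ∘ Prod.snd) :=
        map_withDensity_comp (hZ.prodMk hY) (hg.comp measurable_snd)
    _ = (P.map Z).prod ((gaussianReal 0 v).map (· + κ * v)) := by
        rw [joint, ← tilt, prod_withDensity_right hg]; rfl
    _ = (P.map fun ω => (Z ω, Y ω)).map (Prod.map id (· + κ * v)) := by
        rw [joint, ← Measure.map_prod_map _ _ measurable_id (by fun_prop), Measure.map_id]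
    _ = _ := by rw [Measure.map_map (by fun_prop) (hZ.prodMk hY)]; rfl

end GaussianShift

lemma integrable_of_measure_tsupport_lt_top {X F : Type*} [TopologicalSpace X] [MeasurableSpace X]
    [OpensMeasurableSpace X] [NormedAddCommGroup F] [SecondCountableTopologyEither X F]
    {μ : Measure X} {g : X → F} (hg : Continuous g) (hgc : HasCompactSupport g)
    (hμ : μ (tsupport g) < ∞) : Integrable g μ := by
  obtain ⟨C, hC⟩ := hg.bounded_above_of_compact_support hgc
  exact (integrableOn_iff_integrable_of_support_subset (subset_tsupport g)).1
    (.of_bound hμ hg.aestronglyMeasurable C (ae_of_all _ hC))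

section Translation

variable {E : Type*} [NormedAddCommGroup E] [NormedSpace ℝ E]

lemma apply_add_sub_eq_integral_fderiv {g : E → ℝ} (hg : ContDiff ℝ (⊤ : ℕ∞) g) (x v : E) :
    g (x + v) - g x = ∫ s in (0 : ℝ)..1, fderiv ℝ g (x + s • v) v := by
  have hcont : Continuous (fderiv ℝ g) := hg.continuous_fderiv (by simp)
  have hline (s : ℝ) : HasDerivAt (fun s : ℝ => g (x + s • v)) (fderiv ℝ g (x + s • v) v) s := by
    refine (hg.differentiable (by simp) _).hasFDerivAt.comp_hasDerivAt s ?_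
    simpa using ((hasDerivAt_id s).smul_const v).const_add x
  rw [intervalIntegral.integral_eq_sub_of_hasDerivAt (fun s _ => hline s)
    (Continuous.intervalIntegrable (by fun_prop) _ _)]
  simp

/-- The union of the translates of `K` by `-s • v` for `s ∈ [0, 1]`. It contains the supports of all
the translates `x ↦ g (x + s • v)` of a function `g` supported in `K`. -/
def sweep (K : Set E) (v : E) : Set E := (fun q : E × ℝ => q.1 - q.2 • v) '' K ×ˢ Icc 0 1

lemma mem_sweep {K : Set E} {x v : E} {s : ℝ} (hs : s ∈ Icc 0 1) (hx : x + s • v ∈ K) :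
    x ∈ sweep K v :=
  ⟨(_, s), ⟨hx, hs⟩, by simp⟩

lemma isCompact_sweep {K : Set E} (hK : IsCompact K) (v : E) : IsCompact (sweep K v) :=
  (hK.prod isCompact_Icc).image (by fun_prop)

lemma tsupport_comp_add_subset_sweep {g : E → ℝ} (hgc : HasCompactSupport g) {s : ℝ}
    (hs : s ∈ Icc (0 : ℝ) 1) (v : E) :
    tsupport (fun x => g (x + s • v)) ⊆ sweep (tsupport g) v :=
  closure_minimal (fun _ hx => mem_sweep hs (subset_tsupport g hx)) (isCompact_sweep hgc v).isClosed

variable [MeasurableSpace E] {μ ν : Measure E} {U V : Set E} {v : E}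

/-- The measure `μ` is locally finite on `U` and annihilates the derivatives in the direction `v`
of the test functions supported in `U`: it is weakly invariant under translation along `v`. -/
structure IsWeaklyInvariant (μ : Measure E) (v : E) (U : Set E) : Prop where
  measure_lt_top : ∀ K ⊆ U, IsCompact K → μ K < ∞
  integral_fderiv : ∀ g : E → ℝ, ContDiff ℝ (⊤ : ℕ∞) g → HasCompactSupport g → tsupport g ⊆ U →
    ∫ x, fderiv ℝ g x v ∂μ = 0

lemma IsWeaklyInvariant.const_smul (hμ : IsWeaklyInvariant μ v U) (c : ℝ) :
    IsWeaklyInvariant μ (c • v) U where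
  measure_lt_top := hμ.measure_lt_top
  integral_fderiv g hg hgc hgU := by
    simp only [map_smul, smul_eq_mul, integral_const_mul, hμ.integral_fderiv g hg hgc hgU, mul_zero]

variable [BorelSpace E]

lemma tendsto_smoothTransition_natCast_mul (x : ℝ) :
    Tendsto (fun n : ℕ => smoothTransition (n * x)) atTop (𝓝 ((Ioi 0).indicator 1 x)) := by
  refine tendsto_const_nhds.congr' ?_
  rcases le_or_gt x 0 with hx | hx
  · refine .of_forall fun n => ?_
    beta_reduce
    rw [indicator_of_notMem (notMem_Ioi.2 hx),
      smoothTransition.zero_of_nonpos (mul_nonpos_of_nonneg_of_nonpos n.cast_nonneg hx)]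
  · filter_upwards [(tendsto_natCast_atTop_atTop.atTop_mul_const hx).eventually_ge_atTop 1]
      with n hn
    rw [indicator_of_mem (mem_Ioi.2 hx), smoothTransition.one_of_one_le hn, Pi.one_apply]

lemma measure_eq_of_forall_integral_contDiff [FiniteDimensional ℝ E] (hV : IsOpen V)
    (hμ : μ V < ∞) (hν : ν V < ∞)
    (h : ∀ g : E → ℝ, ContDiff ℝ (⊤ : ℕ∞) g → tsupport g ⊆ closure V →
      ∫ x, g x ∂μ = ∫ x, g x ∂ν) :
    μ V = ν V := by
  obtain ⟨f, hfV, hf, hf01⟩ := hV.exists_contDiff_support_eq (n := ⊤)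
  let g (n : ℕ) (x : E) : ℝ := smoothTransition (n * f x)
  have g_zero (n : ℕ) {x : E} (hx : x ∉ V) : g n x = 0 := by
    have : f x = 0 := by rwa [← hfV, Function.notMem_support] at hx
    simp [g, this]
  have preimage_f : f ⁻¹' Ioi 0 = V := by
    ext x
    rw [← hfV, Function.mem_support]
    exact (hf01 (mem_range_self x)).1.lt_iff_ne'
  have g_lim (x : E) : Tendsto (fun n => g n x) atTop (𝓝 (V.indicator 1 x)) := by
    rw [← preimage_f]
    exact tendsto_smoothTransition_natCast_mul (f x)
  have g_cont (n : ℕ) : ContDiff ℝ (⊤ : ℕ∞) (g n) :=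
    smoothTransition.contDiff.comp (contDiff_const.mul hf)
  have lim (m : Measure E) (hm : m V < ∞) :
      Tendsto (fun n => ∫ x, g n x ∂m) atTop (𝓝 (m.real V)) := by
    rw [← integral_indicator_one hV.measurableSet]
    refine tendsto_integral_of_dominated_convergence (V.indicator 1)
      (fun n => (g_cont n).continuous.aestronglyMeasurable)
      ((integrable_indicator_iff hV.measurableSet).2 (integrableOn_const hm.ne)) (fun n => ?_)
      (ae_of_all _ g_lim)
    refine ae_of_all _ fun x => ?_
    by_cases hx : x ∈ V
    · simpa [hx, g, abs_of_nonneg (smoothTransition.nonneg _)] using smoothTransition.le_one _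
    · simp [g_zero n hx, hx]
  have g_supp (n : ℕ) : tsupport (g n) ⊆ closure V :=
    closure_mono fun x hx => by_contra fun hxV => hx (g_zero n hxV)
  have lim_ν := (lim ν hν).congr fun n => (h (g n) (g_cont n) (g_supp n)).symm
  exact (measureReal_eq_measureReal_iff hμ.ne hν.ne).1 (tendsto_nhds_unique (lim μ hμ) lim_ν)

theorem restrict_eq_of_forall_integral_contDiff [FiniteDimensional ℝ E] (hU : IsOpen U)
    (hμ : ∀ K ⊆ U, IsCompact K → μ K < ∞) (hν : ∀ K ⊆ U, IsCompact K → ν K < ∞)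
    (h : ∀ g : E → ℝ, ContDiff ℝ (⊤ : ℕ∞) g → HasCompactSupport g → tsupport g ⊆ U →
      ∫ x, g x ∂μ = ∫ x, g x ∂ν) :
    μ.restrict U = ν.restrict U := by
  have open_eq {V : Set E} (hV : IsOpen V) (hVc : IsCompact (closure V)) (hVU : closure V ⊆ U) :
      μ V = ν V :=
    measure_eq_of_forall_integral_contDiff hV
      ((measure_mono subset_closure).trans_lt (hμ _ hVU hVc))
      ((measure_mono subset_closure).trans_lt (hν _ hVU hVc)) fun g hg hgV =>
      h g hg (hVc.of_isClosed_subset (isClosed_tsupport g) hgV) (hgV.trans hVU)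
  have exists_nhd : ∀ x ∈ U, ∃ W, IsOpen W ∧ x ∈ W ∧ closure W ⊆ U ∧ IsCompact (closure W) := by
    intro x hx
    simpa only [singleton_subset_iff] using exists_open_between_and_isCompact_closure
      isCompact_singleton hU (singleton_subset_iff.2 hx)
  choose! W hW_open hxW hWU hWc using exists_nhd
  have local_eq {x : E} (hx : x ∈ U) : μ.restrict (W x) = ν.restrict (W x) := by
    have : IsFiniteMeasure (μ.restrict (W x)) :=
      ⟨by simpa using (measure_mono subset_closure).trans_lt (hμ _ (hWU x hx) (hWc x hx))⟩
    refine ext_of_generate_finite _ (BorelSpace.measurable_eq (α := E)) isPiSystem_isOpen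
      (fun V hV => ?_) ?_
    · rw [Measure.restrict_apply hV.measurableSet, Measure.restrict_apply hV.measurableSet]
      have hsub : closure (V ∩ W x) ⊆ closure (W x) := closure_mono inter_subset_right
      exact open_eq (hV.inter (hW_open x hx)) ((hWc x hx).of_isClosed_subset isClosed_closure hsub)
        (hsub.trans (hWU x hx))
    · simpa using open_eq (hW_open x hx) (hWc x hx) (hWU x hx)
  obtain ⟨S, hSU, hS, hcover⟩ := TopologicalSpace.countable_cover_nhdsWithin
    fun x hx => mem_nhdsWithin_of_mem_nhds ((hW_open x hx).mem_nhds (hxW x hx))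
  exact Measure.restrict_congr_mono hcover
    ((Measure.restrict_biUnion_congr hS).2 fun x hx => local_eq (hSU hx))

namespace IsWeaklyInvariant

variable [FiniteDimensional ℝ E] {g : E → ℝ}

lemma integrable_fderiv_add_smul [SFinite μ] (hg : ContDiff ℝ (⊤ : ℕ∞) g)
    (hgc : HasCompactSupport g) (hμ : μ (sweep (tsupport g) v) < ∞) :
    Integrable (fun q : ℝ × E => fderiv ℝ g (q.2 + q.1 • v) v)
      ((volume.restrict (Ioc 0 1)).prod μ) := by
  have hcont : Continuous (fderiv ℝ g) := hg.continuous_fderiv (by simp)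
  obtain ⟨C, hC⟩ := (hcont.clm_apply continuous_const).bounded_above_of_compact_support
    ((hgc.fderiv ℝ).comp_left (g := fun L : E →L[ℝ] ℝ => L v) rfl)
  have bound : Integrable (fun q : ℝ × E => (sweep (tsupport g) v).indicator (fun _ => C) q.2)
      ((volume.restrict (Ioc 0 1)).prod μ) :=
    ((integrable_indicator_iff (isCompact_sweep hgc v).measurableSet).2
      (integrableOn_const hμ.ne)).comp_snd _
  refine bound.mono' (Continuous.aestronglyMeasurable (by fun_prop)) ?_
  refine (Measure.quasiMeasurePreserving_fst.ae (ae_restrict_mem measurableSet_Ioc)).mono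
    fun q hq => ?_
  by_cases hx : q.2 + q.1 • v ∈ tsupport g
  · have : q.2 ∈ sweep (tsupport g) v := mem_sweep (Ioc_subset_Icc_self hq) hx
    simpa [this] using hC (q.2 + q.1 • v)
  · have : fderiv ℝ g (q.2 + q.1 • v) = 0 :=
      image_eq_zero_of_notMem_tsupport fun h => hx (tsupport_fderiv_subset ℝ h)
    simp only [this, zero_apply, norm_zero]
    exact indicator_nonneg (fun _ _ => (norm_nonneg _).trans (hC 0)) _

lemma integral_comp_add [SFinite μ] (hμ : IsWeaklyInvariant μ v U) (hg : ContDiff ℝ (⊤ : ℕ∞) g)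
    (hgc : HasCompactSupport g) (hgU : sweep (tsupport g) v ⊆ U) :
    ∫ x, g (x + v) ∂μ = ∫ x, g x ∂μ := by
  have hμg : μ (sweep (tsupport g) v) < ∞ := hμ.measure_lt_top _ hgU (isCompact_sweep hgc v)
  have compact {s : ℝ} (hs : s ∈ Icc (0 : ℝ) 1) : HasCompactSupport fun x => g (x + s • v) :=
    (isCompact_sweep hgc v).of_isClosed_subset (isClosed_tsupport _)
      (tsupport_comp_add_subset_sweep hgc hs v)
  have smooth (s : ℝ) : ContDiff ℝ (⊤ : ℕ∞) fun x => g (x + s • v) :=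
    hg.comp (contDiff_id.add contDiff_const)
  have integrable {s : ℝ} (hs : s ∈ Icc (0 : ℝ) 1) : Integrable (fun x => g (x + s • v)) μ :=
    integrable_of_measure_tsupport_lt_top (smooth s).continuous (compact hs)
      ((measure_mono (tsupport_comp_add_subset_sweep hgc hs v)).trans_lt hμg)
  have fderiv_zero : ∀ s ∈ Ioc (0 : ℝ) 1, ∫ x, fderiv ℝ g (x + s • v) v ∂μ = 0 := by
    intro s hs
    have := hμ.integral_fderiv _ (smooth s) (compact (Ioc_subset_Icc_self hs))
      ((tsupport_comp_add_subset_sweep hgc (Ioc_subset_Icc_self hs) v).trans hgU)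
    simpa only [fderiv_comp_add_right] using this
  refine sub_eq_zero.1 ?_
  calc ∫ x, g (x + v) ∂μ - ∫ x, g x ∂μ
      = ∫ x, (∫ s in Ioc (0 : ℝ) 1, fderiv ℝ g (x + s • v) v) ∂μ := by
        rw [← integral_sub (by simpa using integrable (right_mem_Icc.2 zero_le_one))
          (by simpa using integrable (left_mem_Icc.2 zero_le_one))]
        simp only [apply_add_sub_eq_integral_fderiv hg, intervalIntegral.integral_of_le zero_le_one]
    _ = ∫ s in Ioc (0 : ℝ) 1, ∫ x, fderiv ℝ g (x + s • v) v ∂μ :=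
        (integral_integral_swap (integrable_fderiv_add_smul hg hgc hμg)).symm
    _ = 0 := by rw [setIntegral_congr_fun measurableSet_Ioc fderiv_zero, integral_zero]

theorem restrict_map_add [SFinite μ] (hμ : IsWeaklyInvariant μ v U) (hV : IsOpen V)
    (hVU : sweep V v ⊆ U) : (μ.map (· + v)).restrict V = μ.restrict V := by
  have sweep_subset {K : Set E} (hK : K ⊆ V) : sweep K v ⊆ U :=
    (image_mono (prod_mono_left hK)).trans hVU
  refine restrict_eq_of_forall_integral_contDiff hV (fun K hK hKc => ?_)
    (fun K hK hKc => ?_) fun g hg hgc hgV => ?_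
  · rw [Measure.map_apply (by fun_prop) hKc.measurableSet]
    refine (measure_mono fun x hx => ?_).trans_lt
      (hμ.measure_lt_top _ (sweep_subset hK) (isCompact_sweep hKc v))
    exact mem_sweep (right_mem_Icc.2 zero_le_one) (by simpa using hx)
  · refine hμ.measure_lt_top K (fun x hx => sweep_subset hK ?_) hKc
    exact mem_sweep (left_mem_Icc.2 zero_le_one) (by simpa using hx)
  · rw [integral_map (by fun_prop) hg.continuous.aestronglyMeasurable]
    exact hμ.integral_comp_add hg hgc (sweep_subset hgV)

end IsWeaklyInvariant

end Translation

section ExpIntegral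

variable {E : Type*} {X : ℝ → E → ℝ}

lemma continuous_exp_sub (hX : ∀ ω, Continuous fun u => X u ω) (ω : E) :
    Continuous fun u => rexp (X u ω - u / 2) := by
  have := hX ω
  fun_prop

lemma hasDerivAt_A (hX : ∀ ω, Continuous fun u => X u ω) (s : ℝ) (ω : E) :
    HasDerivAt (fun s => A X s ω) (M X s ω) s :=
  (continuous_exp_sub hX ω).integral_hasStrictDerivAt 0 s |>.hasDerivAt

lemma continuous_A (hX : ∀ ω, Continuous fun u => X u ω) (ω : E) :
    Continuous fun s => A X s ω :=
  continuous_iff_continuousAt.2 fun s => (hasDerivAt_A hX s ω).continuousAt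

lemma A_sub_A (hX : ∀ ω, Continuous fun u => X u ω) (s t : ℝ) (ω : E) :
    A X t ω - A X s ω = ∫ u in s..t, M X u ω :=
  intervalIntegral.integral_interval_sub_left
    ((continuous_exp_sub hX ω).intervalIntegrable _ _)
    ((continuous_exp_sub hX ω).intervalIntegrable _ _)

lemma A_mono (hX : ∀ ω, Continuous fun u => X u ω) (ω : E) : Monotone fun s => A X s ω :=
  monotone_of_hasDerivAt_nonneg (fun s => hasDerivAt_A hX s ω) fun _ => (exp_pos _).le

lemma A_pos (hX : ∀ ω, Continuous fun u => X u ω) {t : ℝ} (ht : 0 < t) (ω : E) : 0 < A X t ω :=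
  intervalIntegral.intervalIntegral_pos_of_pos ((continuous_exp_sub hX ω).intervalIntegrable _ _)
    (fun _ => exp_pos _) ht

variable [MeasurableSpace E]

lemma measurable_M (hX : ∀ u, Measurable (X u)) (t : ℝ) : Measurable (M X t) :=
  ((hX t).sub_const _).exp

lemma measurable_A (hX : ∀ ω, Continuous fun u => X u ω) (hXm : ∀ u, Measurable (X u)) (t : ℝ) :
    Measurable (A X t) := by
  have joint : StronglyMeasurable fun q : ℝ × E => rexp (X q.1 q.2 - q.1 / 2) :=
    (measurable_uncurry_of_continuous_of_measurable (u := M X)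
      (fun ω => continuous_exp_sub hX ω) (measurable_M hXm)).stronglyMeasurable
  exact (joint.integral_prod_left' (μ := volume.restrict (Ioc 0 t))).measurable.sub
    (joint.integral_prod_left' (μ := volume.restrict (Ioc t 0))).measurable

end ExpIntegral

section Flow

variable {E : Type*} {X : ℝ → E → ℝ}

/-- The endpoint `(X t - t / 2, A t) = (log (M t), A t)` of the process. -/
def endpoint (X : ℝ → E → ℝ) (t : ℝ) (ω : E) : ℝ × ℝ := (X t ω - t / 2, A X t ω)

/-- The process `X` with the drift `κ` added up to time `s`: a Cameron–Martin shift of `X`. -/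
def driftUntil (X : ℝ → E → ℝ) (κ s u : ℝ) (ω : E) : ℝ := X u ω + κ * min u s

/-- The endpoint at time `t` of the path obtained from `X` by adding a unit drift up to time `s`,
written as a smooth function of `s`; see `endpoint_driftUntil`. -/
def flow (X : ℝ → E → ℝ) (t s : ℝ) (ω : E) : ℝ × ℝ :=
  (X t ω - t / 2 + s, A (fun u ω => X u ω + u) s ω + rexp s * (A X t ω - A X s ω))

lemma continuous_driftUntil (hX : ∀ ω, Continuous fun u => X u ω) (κ s : ℝ) (ω : E) :
    Continuous fun u => driftUntil X κ s u ω := by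
  have := hX ω
  unfold driftUntil
  fun_prop

lemma flow_zero (t : ℝ) (ω : E) : flow X t 0 ω = endpoint X t ω := by
  simp [flow, endpoint, A]

lemma A_driftUntil (hX : ∀ ω, Continuous fun u => X u ω) {s t : ℝ} (hs : 0 ≤ s) (hst : s ≤ t)
    (ω : E) : A (driftUntil X 1 s) t ω
      = A (fun u ω => X u ω + u) s ω + rexp s * (A X t ω - A X s ω) := by
  have hdrift := continuous_exp_sub (continuous_driftUntil hX 1 s) ω
  rw [A, ← intervalIntegral.integral_add_adjacent_intervals (hdrift.intervalIntegrable 0 s)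
    (hdrift.intervalIntegrable s t), A_sub_A hX, ← intervalIntegral.integral_const_mul]
  congr 1 <;> refine intervalIntegral.integral_congr fun u hu => ?_
  · rw [uIcc_of_le hs] at hu
    simp [driftUntil, hu.2]
  · rw [uIcc_of_le hst] at hu
    simp only [driftUntil, M, min_eq_right hu.1, ← Real.exp_add]
    ring_nf

lemma A_driftUntil_self (ν : ℝ) {t : ℝ} (ht : 0 ≤ t) (ω : E) :
    A (driftUntil X ν t) t ω = Adrift X ν t ω :=
  intervalIntegral.integral_congr fun u hu => by
    rw [uIcc_of_le ht] at hu
    simp only [driftUntil, min_eq_left hu.2]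
    ring_nf

lemma endpoint_driftUntil (hX : ∀ ω, Continuous fun u => X u ω) {s t : ℝ} (hs : 0 ≤ s)
    (hst : s ≤ t) (ω : E) : endpoint (driftUntil X 1 s) t ω = flow X t s ω := by
  simp only [endpoint, flow, A_driftUntil hX hs hst, driftUntil, min_eq_right hst]
  ring_nf

lemma hasDerivAt_flow (hX : ∀ ω, Continuous fun u => X u ω) (t s : ℝ) (ω : E) :
    HasDerivAt (fun s => flow X t s ω) (1, rexp s * (A X t ω - A X s ω)) s := by
  have hdrift (ω : E) : Continuous fun u => X u ω + u := (hX ω).add continuous_id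
  refine ((hasDerivAt_id s).const_add _).prodMk (((hasDerivAt_A hdrift s ω).add
    ((Real.hasDerivAt_exp s).mul ((hasDerivAt_A hX s ω).const_sub _))).congr_deriv ?_)
  have : rexp s * M X s ω = M (fun u ω => X u ω + u) s ω := by
    rw [M, M, ← Real.exp_add]
    ring_nf
  linear_combination -this

lemma exp_mul_A_sub_le_flow {s : ℝ} (hs : 0 ≤ s) (t : ℝ) (ω : E) :
    rexp s * (A X t ω - A X s ω) ≤ (flow X t s ω).2 :=
  le_add_of_nonneg_left <| intervalIntegral.integral_nonneg hs fun _ _ => (exp_pos _).le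

lemma integral_M_mul_apply (hX : ∀ ω, Continuous fun u => X u ω) (L : ℝ × ℝ →L[ℝ] ℝ) (t : ℝ)
    (ω : E) :
    ∫ s in (0 : ℝ)..t, M X s ω * L (1, A X t ω - A X s ω) = L (A X t ω, A X t ω ^ 2 / 2) := by
  have hA (s : ℝ) := hasDerivAt_A hX s ω
  have hM : Continuous fun s => M X s ω := continuous_exp_sub hX ω
  have hcont := continuous_A hX ω
  have primitive (s : ℝ) : HasDerivAt
      (fun s => L (A X s ω, (A X t ω ^ 2 - (A X t ω - A X s ω) ^ 2) / 2))
      (M X s ω * L (1, A X t ω - A X s ω)) s := by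
    refine (L.hasFDerivAt.comp_hasDerivAt s ((hA s).prodMk
      (((((hA s).const_sub _).pow 2).const_sub _).div_const 2))).congr_deriv ?_
    rw [← smul_eq_mul (M X s ω), ← map_smul]
    rw [Prod.smul_mk, smul_eq_mul, smul_eq_mul, mul_one]
    congr 2
    ring
  rw [intervalIntegral.integral_eq_sub_of_hasDerivAt (fun s _ => primitive s)
    (Continuous.intervalIntegrable (by fun_prop) _ _)]
  have : A X 0 ω = 0 := by simp [A]
  simp [this, ← Prod.zero_eq_mk]

variable [MeasurableSpace E]

lemma measurable_driftUntil (hX : ∀ u, Measurable (X u)) (κ s u : ℝ) :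
    Measurable (driftUntil X κ s u) :=
  (hX u).add_const _

lemma measurable_endpoint (hX : ∀ ω, Continuous fun u => X u ω) (hXm : ∀ u, Measurable (X u))
    (t : ℝ) : Measurable (endpoint X t) :=
  ((hXm t).sub_const _).prodMk (measurable_A hX hXm t)

lemma measurable_flow (hX : ∀ ω, Continuous fun u => X u ω) (hXm : ∀ u, Measurable (X u))
    (t s : ℝ) : Measurable (flow X t s) := by
  have := measurable_A hX hXm
  have := measurable_A (X := fun u ω => X u ω + u) (fun ω => (hX ω).add continuous_id)
    fun u => (hXm u).add_const u
  unfold flow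
  fun_prop

end Flow

section Paths

/-- Continuous paths on `[0, ∞)`, with the σ-algebra generated by the evaluations (the subtype
σ-algebra): the law of a continuous process on this space is determined by its finite-dimensional
marginals, while path integrals are measurable functions on it. -/
abbrev ContPath : Type := {p : ℝ≥0 → ℝ // Continuous p}

namespace ContPath

/-- The canonical process on the path space, indexed by `ℝ` and frozen at negative times. -/
def eval (u : ℝ) (p : ContPath) : ℝ := p.1 u.toNNReal

lemma measurable_eval (u : ℝ) : Measurable (eval u) :=
  (measurable_pi_apply _).comp measurable_subtype_coe

lemma continuous_eval (p : ContPath) : Continuous fun u => eval u p :=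
  p.2.comp continuous_real_toNNReal

variable {Ω : Type*} {X : ℝ → Ω → ℝ}

/-- The trajectory of a continuous process, as a point of the path space. -/
def trajectory (hX : ∀ ω, Continuous fun u => X u ω) (ω : Ω) : ContPath :=
  ⟨fun u => X u ω, (hX ω).comp NNReal.continuous_coe⟩

lemma measurable_trajectory [MeasurableSpace Ω] (hX : ∀ ω, Continuous fun u => X u ω)
    (hXm : ∀ u, Measurable (X u)) : Measurable (trajectory hX) :=
  (measurable_pi_lambda (fun ω (u : ℝ≥0) => X u ω) fun u => hXm u).subtype_mk

lemma eval_trajectory (hX : ∀ ω, Continuous fun u => X u ω) {u : ℝ} (hu : 0 ≤ u) (ω : Ω) :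
    eval u (trajectory hX ω) = X u ω := by
  simp [eval, trajectory, hu]

lemma A_eval_trajectory (hX : ∀ ω, Continuous fun u => X u ω) {t : ℝ} (ht : 0 ≤ t) (ω : Ω) :
    A eval t (trajectory hX ω) = A X t ω :=
  intervalIntegral.integral_congr fun u hu => by
    rw [uIcc_of_le ht] at hu
    simp only [eval_trajectory hX hu.1]

end ContPath

end Paths

namespace IsBrownianMotion

variable {Ω : Type*} [MeasurableSpace Ω] {P : Measure Ω} {B : ℝ → Ω → ℝ}

lemma isPreBrownianReal (hB : IsBrownianMotion P B) :
    IsPreBrownianReal (fun u : ℝ≥0 => B u) P := by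
  have := hB.isProbabilityMeasure
  refine HasIndepIncrements.isPreBrownianReal_of_hasLaw
    (fun u => ⟨(hB.measurable u).aemeasurable, ?_⟩) (HasIndepIncrements.of_nat fun t ht _ => ?_)
  · simpa [hB.start] using hB.gaussian_increments 0 u le_rfl u.2
  · exact hB.indep_increments (fun i => t i) (fun i j hij => by exact_mod_cast ht hij) (t 0).2

/-- For `s > 0`, the Brownian bridge on `[0, s]` followed by the increments of `B` after time `s`:
the component of `B` that is independent of `B s`. For `s = 0` division by zero makes it `B`. -/
def bridge (B : ℝ → Ω → ℝ) (s u : ℝ≥0) (ω : Ω) : ℝ := B u ω - (min u s / s : ℝ≥0) * B s ω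

lemma measurable_bridge (hB : IsBrownianMotion P B) (s u : ℝ≥0) : Measurable (bridge B s u) :=
  (hB.measurable u).sub ((hB.measurable s).const_mul _)

lemma covariance_bridge (hB : IsBrownianMotion P B) (s u : ℝ≥0) :
    cov[bridge B s u, B s; P] = 0 := by
  have hp := hB.isPreBrownianReal
  have := hB.isProbabilityMeasure
  have memLp (v : ℝ≥0) : MemLp (B v) 2 P := (hp.isGaussianProcess.hasGaussianLaw_eval v).memLp_two
  change cov[fun ω => B u ω - (min u s / s : ℝ≥0) * B s ω, B s; P] = 0
  rw [covariance_fun_sub_left (memLp u) ((memLp s).const_mul _) (memLp s),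
    covariance_const_mul_left, hp.covariance_eval, hp.covariance_eval, min_self]
  rcases eq_or_ne s 0 with rfl | hs
  · simp
  · rw [← NNReal.coe_mul, div_mul_cancel₀ _ hs, sub_self]

lemma indepFun_bridge (hB : IsBrownianMotion P B) (s : ℝ≥0) :
    IndepFun (fun ω u => bridge B s u ω) (B s) P := by
  have hp := hB.isPreBrownianReal
  have joint : IsGaussianProcess (Sum.elim (bridge B s) fun _ : Unit => B s) P := by
    refine hp.isGaussianProcess.of_isGaussianProcess ?_
    rintro (u | _)
    · exact ⟨{u, s}, .proj ⟨u, by simp⟩ - ((min u s / s : ℝ≥0) : ℝ) • .proj ⟨s, by simp⟩,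
        by simp [bridge]⟩
    · exact ⟨{s}, .proj ⟨s, by simp⟩, by simp⟩
  exact (joint.indepFun_of_covariance_eq_zero (fun u => (hB.measurable_bridge s u).aemeasurable)
    (fun _ => (hB.measurable s).aemeasurable) fun u _ => hB.covariance_bridge s u).comp
      measurable_id (measurable_pi_apply ())

theorem cameron_martin (hB : IsBrownianMotion P B) (κ : ℝ) (s : ℝ≥0) :
    (P.withDensity fun ω => .ofReal (rexp (κ * B s ω - κ ^ 2 * s / 2))).map
        (ContPath.trajectory hB.continuous_paths)
      = P.map (ContPath.trajectory (continuous_driftUntil hB.continuous_paths κ s)) := by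
  have := hB.isProbabilityMeasure
  let Z (ω : Ω) : ContPath := ⟨fun u => bridge B s u ω, by
    have := hB.continuous_paths ω
    unfold bridge
    fun_prop⟩
  have hZ : Measurable Z := (measurable_pi_lambda _ (hB.measurable_bridge s)).subtype_mk
  have indep : IndepFun Z (B s) P := by
    rw [IndepFun_iff_Indep, Subtype.instMeasurableSpace, MeasurableSpace.comap_comp]
    exact hB.indepFun_bridge s
  let recompose (q : ContPath × ℝ) : ContPath :=
    ⟨fun u => q.1.1 u + (min u s / s : ℝ≥0) * q.2, by have := q.1.2; fun_prop⟩
  have hrec : Measurable recompose := by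
    refine (measurable_pi_lambda _ fun u => ?_).subtype_mk
    exact ((measurable_pi_apply u).comp (measurable_subtype_coe.comp measurable_fst)).add
      (measurable_snd.const_mul _)
  have key := congrArg (Measure.map recompose) <| map_withDensity_exp_of_indepFun hZ
    (hB.measurable s) (hB.isPreBrownianReal.hasLaw_eval s).map_eq indep κ
  rw [Measure.map_map hrec (hZ.prodMk (hB.measurable s)),
    Measure.map_map hrec (hZ.prodMk ((hB.measurable s).add_const _))] at key
  convert key using 2 with ω
  · ext ω u
    simp [ContPath.trajectory, recompose, Z, bridge]
  · ext ω u
    rcases eq_or_ne s 0 with rfl | hs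
    · simp [ContPath.trajectory, driftUntil, recompose, Z, bridge]
    · have : (s : ℝ) ≠ 0 := by exact_mod_cast hs
      simp only [ContPath.trajectory, driftUntil, recompose, Z, bridge, Function.comp_apply,
        NNReal.coe_div, NNReal.coe_min]
      field_simp
      ring

theorem integral_exp_mul_comp (hB : IsBrownianMotion P B) (κ : ℝ) {s t : ℝ} (hs : 0 ≤ s)
    (ht : 0 ≤ t) {Φ : ℝ × ℝ × ℝ → ℝ} (hΦ : Measurable Φ) :
    ∫ ω, rexp (κ * B s ω - κ ^ 2 * s / 2) * Φ (B t ω, A B t ω, A B s ω) ∂P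
      = ∫ ω, Φ (driftUntil B κ s t ω, A (driftUntil B κ s) t ω, A (driftUntil B κ s) s ω) ∂P := by
  lift s to ℝ≥0 using hs
  have hX := continuous_driftUntil hB.continuous_paths κ s
  let Ψ (p : ContPath) : ℝ := Φ (ContPath.eval t p, A ContPath.eval t p, A ContPath.eval s p)
  have hA (r : ℝ) : Measurable (A ContPath.eval r) :=
    measurable_A ContPath.continuous_eval ContPath.measurable_eval r
  have hΨ : Measurable Ψ := hΦ.comp ((ContPath.measurable_eval t).prodMk ((hA t).prodMk (hA s)))
  have key := congrArg (fun μ => ∫ p, Ψ p ∂μ) (hB.cameron_martin κ s)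
  have hB_path := ContPath.measurable_trajectory hB.continuous_paths hB.measurable
  have hX_path := ContPath.measurable_trajectory hX (measurable_driftUntil hB.measurable κ s)
  rw [integral_map hB_path.aemeasurable hΨ.aestronglyMeasurable,
    integral_map hX_path.aemeasurable hΨ.aestronglyMeasurable,
    integral_withDensity_eq_integral_toReal_smul
      (((hB.measurable s).const_mul κ).sub_const _).exp.ennreal_ofReal
      (ae_of_all _ fun _ => ENNReal.ofReal_lt_top)] at key
  simpa only [Ψ, ContPath.eval_trajectory _ ht, ContPath.A_eval_trajectory _ ht,
    ContPath.A_eval_trajectory _ s.coe_nonneg, ENNReal.toReal_ofReal (exp_pos _).le, smul_eq_mul]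
    using key

end IsBrownianMotion

section DerivAlong

/-- The derivative of `f` at the point `q.1` in the direction `(1, q.2)`. -/
def derivAlong (f : ℝ × ℝ → ℝ) (q : (ℝ × ℝ) × ℝ) : ℝ := fderiv ℝ f q.1 (1, q.2)

variable {f : ℝ × ℝ → ℝ}

lemma continuous_derivAlong (hf : ContDiff ℝ 1 f) : Continuous (derivAlong f) := by
  have := hf.continuous_fderiv one_ne_zero
  unfold derivAlong
  fun_prop

lemma exists_bound_derivAlong (hf : ContDiff ℝ 1 f) (hfc : HasCompactSupport f) :
    ∃ C, ∀ (p : ℝ × ℝ) (r : ℝ), 0 ≤ r → r ≤ p.2 → ‖derivAlong f (p, r)‖ ≤ C := by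
  have hcont : Continuous fun p => (1 + ‖p‖) • fderiv ℝ f p :=
    (by fun_prop : Continuous fun p : ℝ × ℝ => 1 + ‖p‖).smul (hf.continuous_fderiv one_ne_zero)
  have hsupp := (hfc.fderiv ℝ).smul_left (f := fun p : ℝ × ℝ => 1 + ‖p‖)
  obtain ⟨C, hC⟩ := hcont.bounded_above_of_compact_support hsupp
  refine ⟨C, fun p r hr hrp => ?_⟩
  have hdir : ‖((1, r) : ℝ × ℝ)‖ ≤ 1 + ‖p‖ := by
    have : r ≤ ‖p‖ := hrp.trans ((le_abs_self p.2).trans (norm_snd_le p))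
    rw [Prod.norm_mk, norm_one, norm_of_nonneg hr]
    exact max_le (by linarith [norm_nonneg p]) (by linarith)
  calc ‖derivAlong f (p, r)‖
      ≤ ‖fderiv ℝ f p‖ * ‖((1, r) : ℝ × ℝ)‖ := (fderiv ℝ f p).le_opNorm (1, r)
    _ ≤ ‖fderiv ℝ f p‖ * (1 + ‖p‖) := by gcongr
    _ = ‖(1 + ‖p‖) • fderiv ℝ f p‖ := by
      rw [norm_smul, norm_of_nonneg (by positivity), mul_comm]
    _ ≤ C := hC p

lemma apply_flow_sub_apply_endpoint {E : Type*} {X : ℝ → E → ℝ}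
    (hX : ∀ ω, Continuous fun u => X u ω) (hf : ContDiff ℝ 1 f) (t : ℝ) (ω : E) :
    f (flow X t t ω) - f (endpoint X t ω)
      = ∫ s in (0 : ℝ)..t, derivAlong f (flow X t s ω, rexp s * (A X t ω - A X s ω)) := by
  have hflow (s : ℝ) := hasDerivAt_flow hX t s ω
  have := continuous_A hX ω
  have := continuous_iff_continuousAt.2 fun s => (hflow s).continuousAt
  have := continuous_derivAlong hf
  rw [← flow_zero]
  refine (intervalIntegral.integral_eq_sub_of_hasDerivAt (f := fun s => f (flow X t s ω))
    (fun s _ => ?_) (Continuous.intervalIntegrable (by fun_prop) _ _)).symm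
  exact ((hf.differentiable one_ne_zero).differentiableAt.hasFDerivAt).comp_hasDerivAt s (hflow s)

end DerivAlong

namespace IsBrownianMotion

variable {Ω : Type*} [MeasurableSpace Ω] {P : Measure Ω} {B : ℝ → Ω → ℝ}

section Moments

lemma integrable_exp (hB : IsBrownianMotion P B) {s : ℝ} (hs : 0 ≤ s) :
    Integrable (fun ω => rexp (B s ω)) P := by
  lift s to ℝ≥0 using hs
  have := integrable_exp_mul_gaussianReal (μ := 0) (v := s) 1
  rw [← (hB.isPreBrownianReal.hasLaw_eval s).map_eq] at this
  simpa [Function.comp_def] using this.comp_measurable (hB.measurable s)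

lemma integral_exp (hB : IsBrownianMotion P B) {s : ℝ} (hs : 0 ≤ s) :
    ∫ ω, rexp (B s ω) ∂P = rexp (s / 2) := by
  lift s to ℝ≥0 using hs
  simpa [mgf] using mgf_gaussianReal (hB.isPreBrownianReal.hasLaw_eval s).map_eq 1

lemma measurable_uncurry (hB : IsBrownianMotion P B) :
    Measurable (fun q : ℝ × Ω => B q.1 q.2) :=
  measurable_uncurry_of_continuous_of_measurable hB.continuous_paths hB.measurable

lemma integrable_exp_add_mul (hB : IsBrownianMotion P B) (κ t : ℝ) :
    Integrable (fun q : ℝ × Ω => rexp (B q.1 q.2 + κ * q.1))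
      ((volume.restrict (Ioc 0 t)).prod P) := by
  have := hB.isProbabilityMeasure
  have := hB.measurable_uncurry
  refine (integrable_prod_iff (Measurable.aestronglyMeasurable (by fun_prop))).2 ⟨?_, ?_⟩
  · refine (ae_restrict_mem measurableSet_Ioc).mono fun s hs => ?_
    simpa only [Real.exp_add] using (hB.integrable_exp hs.1.le).mul_const _
  · have : IntegrableOn (fun s : ℝ => rexp (s / 2) * rexp (κ * s)) (Ioc 0 t) :=
      Continuous.integrableOn_Ioc (by fun_prop)
    refine this.congr_fun (fun s hs => ?_) measurableSet_Ioc
    simp only [norm_eq_abs, abs_exp]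
    simp only [Real.exp_add, integral_mul_const, hB.integral_exp hs.1.le]

lemma integrable_Adrift (hB : IsBrownianMotion P B) (ν : ℝ) {t : ℝ} (ht : 0 ≤ t) :
    Integrable (Adrift B ν t) P := by
  have := hB.isProbabilityMeasure
  refine (hB.integrable_exp_add_mul (ν - 1 / 2) t).integral_prod_right.congr
    (ae_of_all _ fun ω => ?_)
  exact (intervalIntegral.integral_of_le ht).symm

lemma integral_Adrift (hB : IsBrownianMotion P B) {ν t : ℝ} (hν : ν ≠ 0) (ht : 0 ≤ t) :
    ∫ ω, Adrift B ν t ω ∂P = (rexp (ν * t) - 1) / ν := by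
  have := hB.isProbabilityMeasure
  have mean : ∀ s ∈ Ioc 0 t, ∫ ω, rexp (B s ω + (ν - 1 / 2) * s) ∂P = rexp (ν * s) := by
    intro s hs
    simp only [Real.exp_add, integral_mul_const, hB.integral_exp hs.1.le]
    rw [← Real.exp_add]
    ring_nf
  calc ∫ ω, Adrift B ν t ω ∂P
      = ∫ ω, (∫ s in Ioc 0 t, rexp (B s ω + (ν - 1 / 2) * s)) ∂P := by
        simp only [Adrift, intervalIntegral.integral_of_le ht]
    _ = ∫ s in Ioc 0 t, ∫ ω, rexp (B s ω + (ν - 1 / 2) * s) ∂P :=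
        (integral_integral_swap (hB.integrable_exp_add_mul (ν - 1 / 2) t)).symm
    _ = ∫ s in (0 : ℝ)..t, rexp (ν * s) := by
        rw [setIntegral_congr_fun measurableSet_Ioc mean, intervalIntegral.integral_of_le ht]
    _ = (rexp (ν * t) - 1) / ν := by
        rw [intervalIntegral.integral_comp_mul_left _ hν]
        simp [_root_.integral_exp, div_eq_inv_mul]

lemma integrable_M (hB : IsBrownianMotion P B) {t : ℝ} (ht : 0 ≤ t) : Integrable (M B t) P := by
  change Integrable (fun ω => rexp (B t ω - t / 2)) P
  simpa only [Real.exp_sub] using (hB.integrable_exp ht).div_const _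

end Moments

section IntegrationByParts

lemma integral_M_mul_comp (hB : IsBrownianMotion P B) {s t : ℝ} (hs : 0 ≤ s) (hst : s ≤ t)
    {Φ : (ℝ × ℝ) × ℝ → ℝ} (hΦ : Measurable Φ) :
    ∫ ω, M B s ω * Φ (endpoint B t ω, A B t ω - A B s ω) ∂P
      = ∫ ω, Φ (flow B t s ω, rexp s * (A B t ω - A B s ω)) ∂P := by
  have key := hB.integral_exp_mul_comp 1 hs (hs.trans hst)
    (Φ := fun x => Φ ((x.1 - t / 2, x.2.1), x.2.1 - x.2.2)) (by fun_prop)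
  simp only [one_mul, one_pow] at key
  refine key.trans (integral_congr_ae (ae_of_all _ fun ω => ?_))
  have gap : A (driftUntil B 1 s) t ω - A (driftUntil B 1 s) s ω
      = rexp s * (A B t ω - A B s ω) := by
    rw [A_driftUntil hB.continuous_paths hs hst, A_driftUntil hB.continuous_paths hs le_rfl]
    ring
  simp only [gap, ← endpoint_driftUntil hB.continuous_paths hs hst, endpoint]

variable {t : ℝ} {f : ℝ × ℝ → ℝ}

lemma integrable_derivAlong_flow (hB : IsBrownianMotion P B) (hf : ContDiff ℝ 1 f)
    (hfc : HasCompactSupport f) :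
    Integrable (fun q : ℝ × Ω =>
        derivAlong f (flow B t q.1 q.2, rexp q.1 * (A B t q.2 - A B q.1 q.2)))
      ((volume.restrict (Ioc 0 t)).prod P) := by
  have := hB.isProbabilityMeasure
  obtain ⟨C, hC⟩ := exists_bound_derivAlong hf hfc
  have hA := measurable_uncurry_of_continuous_of_measurable (u := A B)
    (continuous_A hB.continuous_paths) (measurable_A hB.continuous_paths hB.measurable)
  have hflow := measurable_uncurry_of_continuous_of_measurable (u := flow B t)
    (fun ω => continuous_iff_continuousAt.2 fun s =>
      (hasDerivAt_flow hB.continuous_paths t s ω).continuousAt)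
    (measurable_flow hB.continuous_paths hB.measurable t)
  have hAt := (measurable_A hB.continuous_paths hB.measurable t).comp
    (measurable_snd : Measurable (Prod.snd : ℝ × Ω → Ω))
  refine Integrable.of_bound ((continuous_derivAlong hf).measurable.comp
    (hflow.prodMk ((measurable_exp.comp measurable_fst).mul
      (hAt.sub hA)))).aestronglyMeasurable C ?_
  refine (Measure.quasiMeasurePreserving_fst.ae (ae_restrict_mem measurableSet_Ioc)).mono
    fun q hq => ?_
  exact hC _ _ (mul_nonneg (exp_pos _).le <| sub_nonneg.2 <| A_mono hB.continuous_paths q.2 hq.2)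
    (exp_mul_A_sub_le_flow hq.1.le t q.2)

lemma integrable_M_mul_derivAlong (hB : IsBrownianMotion P B) (hf : ContDiff ℝ 1 f)
    (hfc : HasCompactSupport f) :
    Integrable (fun q : ℝ × Ω =>
        M B q.1 q.2 * derivAlong f (endpoint B t q.2, A B t q.2 - A B q.1 q.2))
      ((volume.restrict (Ioc 0 t)).prod P) := by
  have := hB.isProbabilityMeasure
  obtain ⟨C, hC⟩ := exists_bound_derivAlong hf hfc
  have hA := measurable_uncurry_of_continuous_of_measurable (u := A B)
    (continuous_A hB.continuous_paths) (measurable_A hB.continuous_paths hB.measurable)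
  have hend := (measurable_endpoint hB.continuous_paths hB.measurable t).comp
    (measurable_snd : Measurable (Prod.snd : ℝ × Ω → Ω))
  have hM : Integrable (fun q : ℝ × Ω => M B q.1 q.2) ((volume.restrict (Ioc 0 t)).prod P) := by
    refine (hB.integrable_exp_add_mul (-1 / 2) t).congr (ae_of_all _ fun q => ?_)
    simp only [M]
    ring_nf
  refine hM.mul_bdd (c := C) ((continuous_derivAlong hf).measurable.comp
    (hend.prodMk ((measurable_snd.comp hend).sub hA))).aestronglyMeasurable ?_
  refine (Measure.quasiMeasurePreserving_fst.ae (ae_restrict_mem measurableSet_Ioc)).mono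
    fun q hq => ?_
  exact hC _ _ (sub_nonneg.2 (A_mono hB.continuous_paths q.2 hq.2))
    (sub_le_self _ (intervalIntegral.integral_nonneg hq.1.le fun _ _ => (exp_pos _).le))

theorem integral_fderiv_endpoint (hB : IsBrownianMotion P B) (ht : 0 ≤ t) (hf : ContDiff ℝ 1 f)
    (hfc : HasCompactSupport f) :
    ∫ ω, fderiv ℝ f (endpoint B t ω) (A B t ω, A B t ω ^ 2 / 2) ∂P
      = ∫ ω, (M B t ω - 1) * f (endpoint B t ω) ∂P := by
  have := hB.isProbabilityMeasure
  obtain ⟨C, hC⟩ := hf.continuous.bounded_above_of_compact_support hfc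
  have hend := measurable_endpoint hB.continuous_paths hB.measurable t
  have hf_end : Integrable (fun ω => f (endpoint B t ω)) P :=
    .of_bound (hf.continuous.measurable.comp hend).aestronglyMeasurable C
      (ae_of_all _ fun _ => hC _)
  have hf_flow : Integrable (fun ω => f (flow B t t ω)) P :=
    .of_bound (hf.continuous.measurable.comp
      (measurable_flow hB.continuous_paths hB.measurable t t)).aestronglyMeasurable C
      (ae_of_all _ fun _ => hC _)
  have hMf : Integrable (fun ω => M B t ω * f (endpoint B t ω)) P :=
    (hB.integrable_M ht).mul_bdd hf_end.aestronglyMeasurable (ae_of_all _ fun _ => hC _)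
  symm
  calc ∫ ω, (M B t ω - 1) * f (endpoint B t ω) ∂P
      = ∫ ω, M B t ω * f (endpoint B t ω) ∂P - ∫ ω, f (endpoint B t ω) ∂P := by
        simp only [sub_mul, one_mul, integral_sub hMf hf_end]
    _ = ∫ ω, f (flow B t t ω) ∂P - ∫ ω, f (endpoint B t ω) ∂P := by
        rw [hB.integral_M_mul_comp ht le_rfl (Φ := fun q => f q.1)
          (hf.continuous.measurable.comp measurable_fst)]
    _ = ∫ ω, (∫ s in Ioc 0 t, derivAlong f (flow B t s ω, rexp s * (A B t ω - A B s ω))) ∂P := by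
        rw [← integral_sub hf_flow hf_end]
        simp only [apply_flow_sub_apply_endpoint hB.continuous_paths hf,
          intervalIntegral.integral_of_le ht]
    _ = ∫ s in Ioc 0 t, ∫ ω, derivAlong f (flow B t s ω, rexp s * (A B t ω - A B s ω)) ∂P :=
        (integral_integral_swap (hB.integrable_derivAlong_flow hf hfc)).symm
    _ = ∫ s in Ioc 0 t, ∫ ω, M B s ω * derivAlong f (endpoint B t ω, A B t ω - A B s ω) ∂P :=
        setIntegral_congr_fun measurableSet_Ioc fun s hs =>
          (hB.integral_M_mul_comp hs.1.le hs.2 (continuous_derivAlong hf).measurable).symm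
    _ = ∫ ω, (∫ s in Ioc 0 t, M B s ω * derivAlong f (endpoint B t ω, A B t ω - A B s ω)) ∂P :=
        integral_integral_swap (hB.integrable_M_mul_derivAlong hf hfc)
    _ = ∫ ω, fderiv ℝ f (endpoint B t ω) (A B t ω, A B t ω ^ 2 / 2) ∂P := by
        simp only [derivAlong, ← intervalIntegral.integral_of_le ht,
          integral_M_mul_apply hB.continuous_paths]

end IntegrationByParts

end IsBrownianMotion

section RecipCoord

/-- The change of coordinates `(log m, x) ↦ (1 / x, m / x ^ 2)`; it is a diffeomorphism of
`ℝ × (0, ∞)` onto the open quadrant and has junk values at `x = 0`. -/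
def recipCoord (p : ℝ × ℝ) : ℝ × ℝ := (p.2⁻¹, rexp p.1 / p.2 ^ 2)

/-- The weight `exp (2 (z / y + y))`, equal to `exp (2 (m + 1) / x)` at `recipCoord (log m, x)`.
It is the integrating factor that absorbs `M - 1` in the integration by parts formula. -/
def recipWeight (q : ℝ × ℝ) : ℝ := rexp (2 * (q.2 / q.1 + q.1))

lemma measurable_recipCoord : Measurable recipCoord := by
  unfold recipCoord
  fun_prop

lemma measurable_recipWeight : Measurable recipWeight := by
  unfold recipWeight
  fun_prop

lemma recipWeight_pos (q : ℝ × ℝ) : 0 < recipWeight q := exp_pos _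

lemma recipCoord_mem {p : ℝ × ℝ} (hp : 0 < p.2) : recipCoord p ∈ Ioi (0 : ℝ) ×ˢ Ioi (0 : ℝ) :=
  ⟨inv_pos.2 hp, by simp only [recipCoord, mem_Ioi]; positivity⟩

lemma recipCoord_snd_div_sq {p : ℝ × ℝ} (hp : p.2 ≠ 0) :
    (recipCoord p).2 / (recipCoord p).1 ^ 2 = rexp p.1 := by
  simp only [recipCoord]
  field_simp

lemma contDiffAt_recipCoord {p : ℝ × ℝ} (hp : p.2 ≠ 0) {n : WithTop ℕ∞} :
    ContDiffAt ℝ n recipCoord p :=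
  (contDiffAt_snd.inv hp).prodMk
    (contDiffAt_fst.exp.div (contDiffAt_snd.pow 2) (pow_ne_zero 2 hp))

lemma contDiffAt_recipWeight {q : ℝ × ℝ} (hq : q.1 ≠ 0) {n : WithTop ℕ∞} :
    ContDiffAt ℝ n recipWeight q :=
  (contDiffAt_const.mul ((contDiffAt_snd.div contDiffAt_fst hq).add contDiffAt_fst)).exp

section Curves

variable {γ : ℝ → ℝ × ℝ} {r s : ℝ}

lemma hasDerivAt_recipCoord_comp (hγ : HasDerivAt γ ((γ s).2, (γ s).2 ^ 2 / 2) s)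
    (h0 : (γ s).2 ≠ 0) : HasDerivAt (fun s => recipCoord (γ s)) (-1 / 2, 0) s := by
  have hfst : HasDerivAt (fun s => (γ s).1) (γ s).2 s := hγ.fst
  have hsnd : HasDerivAt (fun s => (γ s).2) ((γ s).2 ^ 2 / 2) s := hγ.snd
  refine ((hsnd.fun_inv h0).prodMk
    (hfst.exp.fun_div (hsnd.fun_pow 2) (pow_ne_zero 2 h0))).congr_deriv ?_
  congr 1 <;> field_simp
  ring

lemma hasDerivAt_recipWeight_comp (hγ : HasDerivAt γ (r, 0) s) (h0 : (γ s).1 ≠ 0) :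
    HasDerivAt (fun s => recipWeight (γ s))
      (2 * r * (1 - (γ s).2 / (γ s).1 ^ 2) * recipWeight (γ s)) s := by
  have hfst : HasDerivAt (fun s => (γ s).1) r s := hγ.fst
  have hsnd : HasDerivAt (fun s => (γ s).2) 0 s := hγ.snd
  refine (((hsnd.fun_div hfst h0).fun_add hfst).const_mul 2).exp.congr_deriv ?_
  simp only [recipWeight]
  field_simp
  ring

end Curves

variable {H : ℝ × ℝ → ℝ}

/-- The function `(log m, x) ↦ H (1 / x, m / x ^ 2) exp (2 (m + 1) / x)`. -/
def weightedPullback (H : ℝ × ℝ → ℝ) (p : ℝ × ℝ) : ℝ :=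
  recipWeight (recipCoord p) * H (recipCoord p)

lemma contDiffAt_weightedPullback {n : WithTop ℕ∞} (hH : ContDiff ℝ n H) {p : ℝ × ℝ}
    (hp : p.2 ≠ 0) : ContDiffAt ℝ n (weightedPullback H) p :=
  ((contDiffAt_recipWeight (inv_ne_zero hp)).comp p (contDiffAt_recipCoord hp)).mul
    (hH.contDiffAt.comp p (contDiffAt_recipCoord hp))

lemma exists_isCompact_support_weightedPullback (hHc : HasCompactSupport H)
    (hH : tsupport H ⊆ Ioi 0 ×ˢ Ioi 0) :
    ∃ K ⊆ {p : ℝ × ℝ | 0 < p.2}, IsCompact K ∧ Function.support (weightedPullback H) ⊆ K := by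
  let inverse (q : ℝ × ℝ) : ℝ × ℝ := (log (q.2 / q.1 ^ 2), q.1⁻¹)
  have inverse_recipCoord {p : ℝ × ℝ} (hp : p.2 ≠ 0) : inverse (recipCoord p) = p := by
    simp only [inverse, recipCoord, inv_inv]
    rw [inv_pow, div_inv_eq_mul, div_mul_cancel₀ _ (pow_ne_zero 2 hp), log_exp]
  have inverse_cont : ContinuousOn inverse (tsupport H) := fun q hq => by
    obtain ⟨hq1 : 0 < q.1, hq2 : 0 < q.2⟩ := hH hq
    exact (((continuousAt_snd.div (continuousAt_fst.pow 2) (pow_ne_zero 2 hq1.ne')).log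
      (div_pos hq2 (pow_pos hq1 2)).ne').prodMk (continuousAt_fst.inv₀ hq1.ne')).continuousWithinAt
  refine ⟨inverse '' tsupport H, ?_, IsCompact.image_of_continuousOn hHc inverse_cont,
    fun p hp => ?_⟩
  · rintro _ ⟨q, hq, rfl⟩
    exact inv_pos.2 (mem_Ioi.1 (hH hq).1)
  · have hmem : recipCoord p ∈ tsupport H := subset_tsupport H (right_ne_zero_of_mul hp)
    exact ⟨_, hmem, inverse_recipCoord (inv_pos.1 (hH hmem).1).ne'⟩

lemma hasCompactSupport_weightedPullback (hHc : HasCompactSupport H)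
    (hH : tsupport H ⊆ Ioi 0 ×ˢ Ioi 0) : HasCompactSupport (weightedPullback H) := by
  obtain ⟨K, -, hK, hsupp⟩ := exists_isCompact_support_weightedPullback hHc hH
  exact .of_support_subset_isCompact hK hsupp

lemma contDiff_weightedPullback {n : WithTop ℕ∞} (hHn : ContDiff ℝ n H)
    (hHc : HasCompactSupport H) (hH : tsupport H ⊆ Ioi 0 ×ˢ Ioi 0) :
    ContDiff ℝ n (weightedPullback H) := by
  obtain ⟨K, hKpos, hK, hsupp⟩ := exists_isCompact_support_weightedPullback hHc hH
  refine contDiff_iff_contDiffAt.2 fun p => ?_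
  by_cases hp : p ∈ K
  · exact contDiffAt_weightedPullback hHn (hKpos hp).ne'
  · refine contDiffAt_const.congr_of_eventuallyEq (f := fun _ => 0) ?_
    filter_upwards [hK.isClosed.isOpen_compl.mem_nhds hp] with q hq
    exact Function.notMem_support.1 fun h => hq (hsupp h)

lemma fderiv_weightedPullback (hH1 : ContDiff ℝ 1 H) {p : ℝ × ℝ} (hp : p.2 ≠ 0) :
    fderiv ℝ (weightedPullback H) p (p.2, p.2 ^ 2 / 2)
      = (rexp p.1 - 1) * weightedPullback H p
        - 1 / 2 * (recipWeight (recipCoord p) * fderiv ℝ H (recipCoord p) (1, 0)) := by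
  set v : ℝ × ℝ := (p.2, p.2 ^ 2 / 2)
  let γ (s : ℝ) : ℝ × ℝ := p + s • v
  have γ_zero : γ 0 = p := by simp [γ]
  have hγ : HasDerivAt γ ((γ 0).2, (γ 0).2 ^ 2 / 2) 0 := by
    rw [γ_zero]
    exact (((hasDerivAt_id 0).smul_const v).const_add p).congr_deriv (one_smul ℝ v)
  have hcoord := hasDerivAt_recipCoord_comp hγ (by rwa [γ_zero])
  have hweight := hasDerivAt_recipWeight_comp hcoord (by simpa [recipCoord, γ_zero] using hp)
  have hHcoord : HasDerivAt (fun s => H (recipCoord (γ s)))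
      (fderiv ℝ H (recipCoord (γ 0)) (-1 / 2, 0)) 0 :=
    (hH1.differentiable one_ne_zero (recipCoord (γ 0))).hasFDerivAt.comp_hasDerivAt 0 hcoord
  have hdiff : DifferentiableAt ℝ (weightedPullback H) p :=
    (contDiffAt_weightedPullback hH1 hp).differentiableAt one_ne_zero
  have key := (hdiff.hasFDerivAt.hasLineDerivAt v).unique (hweight.fun_mul hHcoord)
  have hdir : ((-1 / 2, 0) : ℝ × ℝ) = (-1 / 2 : ℝ) • ((1, 0) : ℝ × ℝ) := by simp
  simp only [γ_zero, recipCoord_snd_div_sq hp, hdir, map_smul, smul_eq_mul, zero_smul,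
    add_zero] at key
  rw [key, weightedPullback]
  ring

end RecipCoord

namespace IsBrownianMotion

variable {Ω : Type*} [MeasurableSpace Ω] {P : Measure Ω} {B : ℝ → Ω → ℝ}

section WeightedLaw

/-- The law of `recipCoord (endpoint B t) = (1 / A t, M t / A t ^ 2)`, weighted by `recipWeight`. -/
def weightedLaw (P : Measure Ω) (B : ℝ → Ω → ℝ) (t : ℝ) : Measure (ℝ × ℝ) :=
  (P.map fun ω => recipCoord (endpoint B t ω)).withDensity fun q => .ofReal (recipWeight q)

lemma measurable_recipCoord_endpoint (hB : IsBrownianMotion P B) (t : ℝ) :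
    Measurable fun ω => recipCoord (endpoint B t ω) :=
  measurable_recipCoord.comp (measurable_endpoint hB.continuous_paths hB.measurable t)

lemma recipCoord_endpoint_mem (hB : IsBrownianMotion P B) {t : ℝ} (ht : 0 < t) (ω : Ω) :
    recipCoord (endpoint B t ω) ∈ Ioi (0 : ℝ) ×ˢ Ioi (0 : ℝ) :=
  recipCoord_mem (A_pos hB.continuous_paths ht ω)

lemma integral_weightedLaw (hB : IsBrownianMotion P B) (t : ℝ) {h : ℝ × ℝ → ℝ}
    (hm : Measurable h) :
    ∫ q, h q ∂weightedLaw P B t = ∫ ω, weightedPullback h (endpoint B t ω) ∂P := by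
  rw [weightedLaw, integral_withDensity_eq_integral_toReal_smul
      measurable_recipWeight.ennreal_ofReal (ae_of_all _ fun _ => ENNReal.ofReal_lt_top),
    integral_map (hB.measurable_recipCoord_endpoint t).aemeasurable
      (measurable_recipWeight.ennreal_ofReal.ennreal_toReal.fun_smul hm).aestronglyMeasurable]
  simp only [weightedPullback, smul_eq_mul, ENNReal.toReal_ofReal (recipWeight_pos _).le]

lemma weightedLaw_lt_top (hB : IsBrownianMotion P B) (t : ℝ) {K : Set (ℝ × ℝ)}
    (hK : K ⊆ Ioi 0 ×ˢ Ioi 0) (hKc : IsCompact K) : weightedLaw P B t K < ∞ := by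
  have := hB.isProbabilityMeasure
  have hcont : ContinuousOn (fun q => (recipWeight q).toNNReal) K :=
    continuous_real_toNNReal.comp_continuousOn fun q hq =>
      (contDiffAt_recipWeight (n := 0) (hK hq).1.ne').continuousAt.continuousWithinAt
  rw [weightedLaw, withDensity_apply _ hKc.measurableSet]
  exact setLIntegral_lt_top_of_bddAbove (measure_ne_top _ K) (hKc.bddAbove_image hcont)

lemma integrable_mul_weightedPullback_endpoint (hB : IsBrownianMotion P B) (t : ℝ) {G : ℝ × ℝ → ℝ}
    (hG : Continuous G) (hGc : HasCompactSupport G) (hGQ : tsupport G ⊆ Ioi 0 ×ˢ Ioi 0)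
    {F : Ω → ℝ} (hF : Integrable F P) :
    Integrable (fun ω => F ω * weightedPullback G (endpoint B t ω)) P := by
  have hcont := (contDiff_weightedPullback (contDiff_zero.2 hG) hGc hGQ).continuous
  obtain ⟨C, hC⟩ := hcont.bounded_above_of_compact_support
    (hasCompactSupport_weightedPullback hGc hGQ)
  have hend := measurable_endpoint hB.continuous_paths hB.measurable t
  exact hF.mul_bdd (hcont.measurable.comp hend).aestronglyMeasurable (ae_of_all _ fun _ => hC _)

theorem isWeaklyInvariant_weightedLaw (hB : IsBrownianMotion P B) {t : ℝ} (ht : 0 < t) :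
    IsWeaklyInvariant (weightedLaw P B t) (1, 0) (Ioi 0 ×ˢ Ioi 0) where
  measure_lt_top K hK hKc := hB.weightedLaw_lt_top t hK hKc
  integral_fderiv g hg hgc hgQ := by
    have := hB.isProbabilityMeasure
    have hg1 : ContDiff ℝ 1 g := hg.of_le (by norm_cast)
    let g' (q : ℝ × ℝ) : ℝ := fderiv ℝ g q (1, 0)
    have hg' : Continuous g' := (hg1.continuous_fderiv one_ne_zero).clm_apply continuous_const
    have hI : Integrable (fun ω => (M B t ω - 1) * weightedPullback g (endpoint B t ω)) P :=
      hB.integrable_mul_weightedPullback_endpoint t hg1.continuous hgc hgQ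
        ((hB.integrable_M ht.le).sub (integrable_const 1))
    have hI' : Integrable (fun ω => 1 / 2 * weightedPullback g' (endpoint B t ω)) P :=
      hB.integrable_mul_weightedPullback_endpoint t hg' (hgc.fderiv_apply ℝ _)
        ((tsupport_fderiv_apply_subset ℝ _).trans hgQ) (integrable_const (1 / 2))
    have ibp := hB.integral_fderiv_endpoint ht.le (contDiff_weightedPullback hg1 hgc hgQ)
      (hasCompactSupport_weightedPullback hgc hgQ)
    have hfderiv (ω : Ω) : fderiv ℝ (weightedPullback g) (endpoint B t ω)
        (A B t ω, A B t ω ^ 2 / 2) = (M B t ω - 1) * weightedPullback g (endpoint B t ω)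
          - 1 / 2 * weightedPullback g' (endpoint B t ω) :=
      fderiv_weightedPullback hg1 (A_pos hB.continuous_paths ht ω).ne'
    simp only [hfderiv, integral_sub hI hI', integral_const_mul] at ibp
    change ∫ q, g' q ∂weightedLaw P B t = 0
    rw [hB.integral_weightedLaw t hg'.measurable]
    linarith

theorem restrict_map_add_weightedLaw (hB : IsBrownianMotion P B) {t c : ℝ} (ht : 0 < t)
    (hc : 0 ≤ c) :
    ((weightedLaw P B t).map (· + (c, 0))).restrict (Ioi c ×ˢ Ioi 0)
      = (weightedLaw P B t).restrict (Ioi c ×ˢ Ioi 0) := by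
  have := hB.isProbabilityMeasure
  have : SFinite (weightedLaw P B t) := by unfold weightedLaw; infer_instance
  have hinv := (hB.isWeaklyInvariant_weightedLaw ht).const_smul c
  simp only [Prod.smul_mk, smul_eq_mul, mul_one, mul_zero] at hinv
  refine hinv.restrict_map_add (isOpen_Ioi.prod isOpen_Ioi) ?_
  rintro _ ⟨⟨⟨y, z⟩, s⟩, ⟨⟨hy, hz⟩, hs⟩, rfl⟩
  simp only [mem_Ioi] at hy hz
  have : s * c ≤ c := mul_le_of_le_one_left hc hs.2
  simp only [mem_prod, mem_Ioi, Prod.smul_mk, Prod.mk_sub_mk, smul_eq_mul]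
  constructor <;> linarith

theorem integral_weightedPullback_comp_add (hB : IsBrownianMotion P B) {t c : ℝ} (ht : 0 < t)
    (hc : 0 ≤ c) {h : ℝ × ℝ → ℝ} (hm : Measurable h) :
    ∫ ω, weightedPullback (fun q => h (q + (c, 0))) (endpoint B t ω) ∂P
      = ∫ ω, weightedPullback ((Ioi c ×ˢ Ioi 0).indicator h) (endpoint B t ω) ∂P := by
  have hV : MeasurableSet (Ioi c ×ˢ Ioi (0 : ℝ)) := measurableSet_Ioi.prod measurableSet_Ioi
  have shift_mem (ω : Ω) : recipCoord (endpoint B t ω) + (c, 0) ∈ Ioi c ×ˢ Ioi (0 : ℝ) := by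
    obtain ⟨hy, hz⟩ := hB.recipCoord_endpoint_mem ht ω
    simp only [mem_Ioi] at hy hz
    simp [hy, hz]
  have hmV := hm.indicator hV
  calc ∫ ω, weightedPullback (fun q => h (q + (c, 0))) (endpoint B t ω) ∂P
      = ∫ ω, weightedPullback (fun q => (Ioi c ×ˢ Ioi 0).indicator h (q + (c, 0)))
          (endpoint B t ω) ∂P := by
        simp only [weightedPullback, indicator_of_mem (shift_mem _)]
    _ = ∫ q, (Ioi c ×ˢ Ioi 0).indicator h q ∂(weightedLaw P B t).map (· + (c, 0)) := by
        rw [integral_map (by fun_prop) hmV.aestronglyMeasurable,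
          hB.integral_weightedLaw t
            (h := fun q => (Ioi c ×ˢ Ioi 0).indicator h (q + (c, 0)))
            (hmV.comp (measurable_add_const (c, 0)))]
    _ = ∫ q, (Ioi c ×ˢ Ioi 0).indicator h q ∂weightedLaw P B t := by
        rw [integral_indicator hV, hB.restrict_map_add_weightedLaw ht hc, integral_indicator hV]
    _ = _ := hB.integral_weightedLaw t hmV

end WeightedLaw

end IsBrownianMotion

section PutKernel

/-- The function whose `weightedPullback` is the weighted put payoff `m ^ ν * max (a - x) 0`. -/
def putKernel (a ν : ℝ) (q : ℝ × ℝ) : ℝ :=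
  (recipWeight q)⁻¹ * ((q.2 / q.1 ^ 2) ^ ν * max (a - q.1⁻¹) 0)

lemma measurable_putKernel (a ν : ℝ) : Measurable (putKernel a ν) := by
  have := measurable_recipWeight
  unfold putKernel
  fun_prop

lemma weightedPullback_putKernel (a ν : ℝ) {p : ℝ × ℝ} (hp : p.2 ≠ 0) :
    weightedPullback (putKernel a ν) p = rexp p.1 ^ ν * max (a - p.2) 0 := by
  have hm : (recipCoord p).2 / (recipCoord p).1 ^ 2 = rexp p.1 := recipCoord_snd_div_sq hp
  have hx : (recipCoord p).1⁻¹ = p.2 := inv_inv p.2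
  rw [weightedPullback, putKernel, hm, hx, mul_inv_cancel_left₀ (recipWeight_pos _).ne']

lemma weightedPullback_indicator_putKernel (a ν : ℝ) {p : ℝ × ℝ}
    (hp : 0 < p.2) :
    weightedPullback ((Ioi a⁻¹ ×ˢ Ioi 0).indicator (putKernel a ν)) p
      = rexp p.1 ^ ν * max (a - p.2) 0 := by
  rw [← weightedPullback_putKernel a ν hp.ne']
  by_cases h : recipCoord p ∈ Ioi a⁻¹ ×ˢ Ioi (0 : ℝ)
  · simp only [weightedPullback, indicator_of_mem h]
  · have hpa : a ≤ p.2 := by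
      by_contra! hlt
      exact h ⟨inv_strictAnti₀ hp hlt, (recipCoord_mem hp).2⟩
    rw [weightedPullback_putKernel a ν hp.ne', max_eq_right (sub_nonpos.2 hpa), mul_zero,
      weightedPullback, indicator_of_notMem h, mul_zero]

lemma mul_div_sq_rpow_mul {a b m : ℝ} (ha : 0 < a) (hb : 0 < b) (hm : 0 < m) (ν : ℝ) :
    (m * (a / b) ^ 2) ^ ν * (a ^ 2 / b) = a ^ (2 * ν + 2) * (m ^ ν * b ^ (-(2 * ν + 1))) := by
  rw [mul_rpow hm.le (by positivity), ← rpow_natCast_mul (div_pos ha hb).le,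
    div_rpow ha.le hb.le, rpow_add ha, rpow_neg hb.le, rpow_add_one hb.ne']
  norm_num
  field_simp

lemma weightedPullback_putKernel_add {a : ℝ} (ha : 0 < a) (ν : ℝ) {p : ℝ × ℝ} (hp : 0 < p.2) :
    weightedPullback (fun q => putKernel a ν (q + (a⁻¹, 0))) p
      = a ^ (2 * ν + 2) * (rexp p.1 ^ ν * (a + p.2) ^ (-(2 * ν + 1)) *
          rexp (2 * rexp p.1 / (a + p.2) - 2 / a)) := by
  have hap : 0 < a + p.2 := add_pos ha hp
  have weight : recipWeight (recipCoord p) * (recipWeight (recipCoord p + (a⁻¹, 0)))⁻¹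
      = rexp (2 * rexp p.1 / (a + p.2) - 2 / a) := by
    simp only [recipWeight, recipCoord, Prod.mk_add_mk, add_zero, ← Real.exp_neg, ← Real.exp_add]
    congr 1
    field_simp
    ring
  have base : rexp p.1 / p.2 ^ 2 / (p.2⁻¹ + a⁻¹) ^ 2 = rexp p.1 * (a / (a + p.2)) ^ 2 := by
    field_simp
  have payoff : max (a - (p.2⁻¹ + a⁻¹)⁻¹) 0 = a ^ 2 / (a + p.2) := by
    have : a - (p.2⁻¹ + a⁻¹)⁻¹ = a ^ 2 / (a + p.2) := by
      field_simp
      ring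
    rw [this, max_eq_left (by positivity)]
  rw [weightedPullback, putKernel, ← mul_assoc, weight]
  simp only [recipCoord, Prod.mk_add_mk, add_zero, base, payoff,
    mul_div_sq_rpow_mul ha hap (exp_pos p.1)]
  ring

end PutKernel

namespace IsBrownianMotion

variable {Ω : Type*} [MeasurableSpace Ω] {P : Measure Ω} {B : ℝ → Ω → ℝ} {t a ν : ℝ}

theorem integral_M_rpow_mul_put (hB : IsBrownianMotion P B) (ht : 0 < t) (ha : 0 < a) (ν : ℝ) :
    ∫ ω, M B t ω ^ ν * max (a - A B t ω) 0 ∂P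
      = a ^ (2 * ν + 2) * ∫ ω, M B t ω ^ ν * (a + A B t ω) ^ (-(2 * ν + 1)) *
          rexp (2 * M B t ω / (a + A B t ω) - 2 / a) ∂P := by
  have hA (ω : Ω) : 0 < (endpoint B t ω).2 := A_pos hB.continuous_paths ht ω
  have shift := hB.integral_weightedPullback_comp_add ht (inv_pos.2 ha).le
    (measurable_putKernel a ν)
  simp only [weightedPullback_indicator_putKernel a ν (hA _),
    weightedPullback_putKernel_add ha ν (hA _), integral_const_mul] at shift
  exact shift.symm

lemma integral_put_Adrift (hB : IsBrownianMotion P B) (ht : 0 ≤ t) (a ν : ℝ) :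
    ∫ ω, max (a - Adrift B ν t ω) 0 ∂P
      = rexp (ν * t / 2 - ν ^ 2 * t / 2) * ∫ ω, M B t ω ^ ν * max (a - A B t ω) 0 ∂P := by
  have density (ω : Ω) : rexp (ν * B t ω - ν ^ 2 * t / 2)
      = rexp (ν * t / 2 - ν ^ 2 * t / 2) * M B t ω ^ ν := by
    rw [M, ← Real.exp_mul, ← Real.exp_add]
    ring_nf
  have girsanov := hB.integral_exp_mul_comp ν ht ht (Φ := fun x => max (a - x.2.1) 0) (by fun_prop)
  simp only [A_driftUntil_self ν ht, density, mul_assoc, integral_const_mul] at girsanov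
  exact girsanov.symm

lemma integral_call_Adrift (hB : IsBrownianMotion P B) (ht : 0 ≤ t) (hν : ν ≠ 0) (a : ℝ) :
    ∫ ω, max (Adrift B ν t ω - a) 0 ∂P
      = (rexp (ν * t) - 1) / ν - a + ∫ ω, max (a - Adrift B ν t ω) 0 ∂P := by
  have := hB.isProbabilityMeasure
  have hI := hB.integrable_Adrift ν ht
  have hfwd : Integrable (fun ω => Adrift B ν t ω - a) P := hI.sub (integrable_const a)
  have hput : Integrable (fun ω => max (a - Adrift B ν t ω) 0) P :=
    ((integrable_const a).sub hI).pos_part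
  have parity (ω : Ω) : max (Adrift B ν t ω - a) 0
      = Adrift B ν t ω - a + max (a - Adrift B ν t ω) 0 := by
    rw [← max_add_add_left]
    simp [max_comm]
  simp only [parity]
  rw [integral_add hfwd hput, integral_sub hI (integrable_const a), hB.integral_Adrift hν ht]
  simp

end IsBrownianMotion

theorem expected_max_drift (hB : IsBrownianMotion P B) (t a ν : ℝ)
    (ht : 0 < t) (ha : 0 < a) (hν : ν ≠ 0) :
    (∫ ω, max (Adrift B ν t ω - a) 0 ∂P)
      = (Real.exp (ν * t) - 1) / ν - a
        + Real.exp (ν * t / 2 - ν ^ 2 * t / 2) * a ^ (2 * ν + 2) *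
          ∫ ω, M B t ω ^ ν * (a + A B t ω) ^ (-(2 * ν + 1)) *
                Real.exp (2 * M B t ω / (a + A B t ω) - 2 / a) ∂P := by
  rw [hB.integral_call_Adrift ht.le hν a, hB.integral_put_Adrift ht.le a ν,
    hB.integral_M_rpow_mul_put ht ha ν, mul_assoc]
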